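/- For the dimension vector d = (1,1,1,1,1,1,1) with t = 7 and the triple a = (2,3,2), the Borel subgroup B of upper-triangular matrices in GL_7(k) acts on the Lie algebra q_u of the unipotent radical of the parabolic subgroup Q = P(2,3,2) (stabilizer of the flag 0 ⊆ k^2 ⊆ k^5 ⊆ k^7) with infinitely many orbits. In fact, dim B/Q_u = dim q_u/q_u' where q_u' is the derived subalgebra, and since scalar matrices act trivially there is no dense orbit of B/Q_u on q_u/q_u'. -/

import Mathlib

/-- the Q-block (0, 1 or 2) of an index `0 ≤ i < 7` for the parabolic `Q = P(2,3,2)` of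
`GL₇` (0-based indexing: the flag jumps are at `2` and `5`). -/
def qb0 (i : ℕ) : ℕ := if i < 2 then 0 else if i < 5 then 1 else 2

/-- the Borel subgroup `B` of invertible upper-triangular `7 × 7` matrices. -/
def B0 (k : Type*) [Field k] : Set (Matrix (Fin 7) (Fin 7) k) :=
  {g | (∃ g', g * g' = 1 ∧ g' * g = 1) ∧ ∀ i j : Fin 7, (j : ℕ) < (i : ℕ) → g i j = 0}

/-- the Lie algebra `q_u` of the unipotent radical of `Q = P(2,3,2)`: matrices supported on
the strictly super-diagonal `Q`-blocks. -/
def qu0 (k : Type*) [Field k] : Set (Matrix (Fin 7) (Fin 7) k) :=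
  {X | ∀ i j : Fin 7, ¬ qb0 i < qb0 j → X i j = 0}

/-- the set of orbits of the adjoint (conjugation) action of `B` on `q_u`. -/
def orbits0 (k : Type*) [Field k] : Set (Set (Matrix (Fin 7) (Fin 7) k)) :=
  {O | ∃ X ∈ qu0 k, O =
    {Y | ∃ g h, g ∈ B0 k ∧ g * h = 1 ∧ h * g = 1 ∧ Y = g * X * h}}

/-- the Zariski topology on `7 × 7` matrices over `k`. -/
noncomputable def zariskiMat (k : Type*) [Field k] : TopologicalSpace (Matrix (Fin 7) (Fin 7) k) :=
  TopologicalSpace.induced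
    (fun X => (⟨RingHom.ker (MvPolynomial.eval fun p : Fin 7 × Fin 7 => X p.1 p.2),
      RingHom.ker_isPrime _⟩ : PrimeSpectrum (MvPolynomial (Fin 7 × Fin 7) k)))
    inferInstance

/-- the projection killing the `(1,3)` block, modelling `q_u → q_u/q_u'`. -/
def proj0 (k : Type*) [Field k] (X : Matrix (Fin 7) (Fin 7) k) : Matrix (Fin 7) (Fin 7) k :=
  fun i j => if qb0 i = 0 ∧ qb0 j = 2 then 0 else X i j

open MvPolynomial in
lemma zar_closed (k : Type*) [Field k] (F : MvPolynomial (Fin 7 × Fin 7) k) :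
    @IsClosed _ (zariskiMat k) {Y : Matrix (Fin 7) (Fin 7) k |
      MvPolynomial.eval (fun p : Fin 7 × Fin 7 => Y p.1 p.2) F = 0} := by
  unfold zariskiMat
  rw [isClosed_induced_iff]
  refine ⟨PrimeSpectrum.zeroLocus {F}, PrimeSpectrum.isClosed_zeroLocus _, ?_⟩
  ext Y
  simp [PrimeSpectrum.mem_zeroLocus, RingHom.mem_ker]

/-- entries of `A * C` -/
def acE {R : Type*} [CommRing R] (Y : Fin 7 → Fin 7 → R) (i j : Fin 7) : R :=
  Y i 2 * Y 2 j + Y i 3 * Y 3 j + Y i 4 * Y 4 j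

/-- numerator of the invariant -/
def numP {R : Type*} [CommRing R] (Y : Fin 7 → Fin 7 → R) : R :=
  (Y 0 2 * Y 1 3 - Y 0 3 * Y 1 2) * (Y 3 5 * Y 4 6 - Y 3 6 * Y 4 5) * acE Y 1 5

/-- denominator of the invariant -/
def denR {R : Type*} [CommRing R] (Y : Fin 7 → Fin 7 → R) : R :=
  Y 1 2 * Y 4 5 * (acE Y 0 5 * acE Y 1 6 - acE Y 0 6 * acE Y 1 5)

lemma eval_numP (k : Type*) [Field k] (Y : Matrix (Fin 7) (Fin 7) k) :
    MvPolynomial.eval (fun p : Fin 7 × Fin 7 => Y p.1 p.2)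
      (numP fun i j => MvPolynomial.X (i, j)) = numP Y := by
  simp [numP, acE]

lemma eval_denR (k : Type*) [Field k] (Y : Matrix (Fin 7) (Fin 7) k) :
    MvPolynomial.eval (fun p : Fin 7 × Fin 7 => Y p.1 p.2)
      (denR fun i j => MvPolynomial.X (i, j)) = denR Y := by
  simp [denR, acE]

lemma numP_proj (k : Type*) [Field k] (Y : Matrix (Fin 7) (Fin 7) k) :
    numP (proj0 k Y) = numP Y := by
  simp [numP, acE, proj0, qb0]

lemma denR_proj (k : Type*) [Field k] (Y : Matrix (Fin 7) (Fin 7) k) :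
    denR (proj0 k Y) = denR Y := by
  simp [denR, acE, proj0, qb0]

lemma upper_inv (k : Type*) [Field k] {g h : Matrix (Fin 7) (Fin 7) k}
    (hg : g ∈ B0 k) (hgh : g * h = 1) : ∀ i j : Fin 7, (j : ℕ) < (i : ℕ) → h i j = 0 := by
  have hinv : g⁻¹ = h := Matrix.inv_eq_right_inv hgh
  have : Invertible g := ⟨h, mul_eq_one_comm.mp hgh, hgh⟩
  have hT : g.BlockTriangular id := fun i j hij => hg.2 i j hij
  have := Matrix.blockTriangular_inv_of_blockTriangular hT
  rw [hinv] at this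
  exact fun i j hij => this hij

set_option maxHeartbeats 2000000 in
lemma qu_sq (k : Type*) [Field k] {X : Matrix (Fin 7) (Fin 7) k} (hX : X ∈ qu0 k)
    (i j : Fin 7) : (X * X) i j = if qb0 i = 0 ∧ qb0 j = 2 then acE X i j else 0 := by
  have z : ∀ i j : Fin 7, ¬ qb0 i < qb0 j → X i j = 0 := hX
  rw [Matrix.mul_apply, Fin.sum_univ_seven]
  fin_cases i <;> fin_cases j <;> simp [acE, qb0, z]

lemma conj_apply (k : Type*) [Field k] {g X h : Matrix (Fin 7) (Fin 7) k} (i j : Fin 7) :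
    (g * X * h) i j = ∑ b, (∑ a, g i a * X a b) * h b j := by
  simp [Matrix.mul_apply]

section
variable (k : Type*) [Field k] {g X h : Matrix (Fin 7) (Fin 7) k}
  (hg : ∀ i j : Fin 7, (j : ℕ) < (i : ℕ) → g i j = 0)
  (hh : ∀ i j : Fin 7, (j : ℕ) < (i : ℕ) → h i j = 0)
  (z : ∀ i j : Fin 7, ¬ qb0 i < qb0 j → X i j = 0)

lemma conj_qu (hg : ∀ i j : Fin 7, (j : ℕ) < (i : ℕ) → g i j = 0)
  (hh : ∀ i j : Fin 7, (j : ℕ) < (i : ℕ) → h i j = 0)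
  (z : X ∈ qu0 k) : g * X * h ∈ qu0 k := by
  intro i j hij
  rw [conj_apply]
  refine Finset.sum_eq_zero fun b _ => ?_
  by_cases hb : (j : ℕ) < b
  · rw [hh b j hb, mul_zero]
  · rw [Finset.sum_eq_zero, zero_mul]
    intro a _
    by_cases ha : (a : ℕ) < i
    · rw [hg i a ha, zero_mul]
    · rw [z a b, mul_zero]
      unfold qb0 at *
      split_ifs at * <;> omega

lemma semi (hg : ∀ i j : Fin 7, (j : ℕ) < (i : ℕ) → g i j = 0)
  (hh : ∀ i j : Fin 7, (j : ℕ) < (i : ℕ) → h i j = 0)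
  (hX : X ∈ qu0 k) (hgh : h * g = 1) :
    ∃ c : k, numP (g * X * h) = c * numP X ∧ denR (g * X * h) = c * denR X := by
  have z : ∀ i j : Fin 7, ¬ qb0 i < qb0 j → X i j = 0 := hX
  have hYq := conj_qu k hg hh hX
  have hsq : (g * X * h) * (g * X * h) = g * (X * X) * h := by
    calc _ = g * X * (h * g) * X * h := by simp only [Matrix.mul_assoc]
      _ = _ := by rw [hgh]; simp only [Matrix.mul_assoc, Matrix.one_mul]
  have hd : ∀ i, h i i * g i i = 1 := by
    intro i
    have := congrFun (congrFun hgh i) i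
    rw [Matrix.mul_apply, Finset.sum_eq_single i] at this
    · simpa using this
    · intro b _ hb
      rcases lt_or_gt_of_ne hb with hb | hb
      · rw [hh i b hb, zero_mul]
      · rw [hg b i hb, mul_zero]
    · simp
  have hac : ∀ i j : Fin 7, qb0 i = 0 ∧ qb0 j = 2 →
      acE (g * X * h) i j = (g * (X * X) * h) i j := by
    intro i j hij
    rw [← hsq, qu_sq k hYq, if_pos hij]
  have e15 : acE (g * X * h) 1 5 = g 1 1 * acE X 1 5 * h 5 5 := by
    rw [hac _ _ (by decide), conj_apply]
    simp [Fin.sum_univ_seven, qu_sq k hX, qb0, hg, hh]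
  have e05 : acE (g * X * h) 0 5 = (g 0 0 * acE X 0 5 + g 0 1 * acE X 1 5) * h 5 5 := by
    rw [hac _ _ (by decide), conj_apply]
    simp [Fin.sum_univ_seven, qu_sq k hX, qb0, hg, hh]
  have e16 : acE (g * X * h) 1 6 = g 1 1 * acE X 1 5 * h 5 6 + g 1 1 * acE X 1 6 * h 6 6 := by
    rw [hac _ _ (by decide), conj_apply]
    simp [Fin.sum_univ_seven, qu_sq k hX, qb0, hg, hh]
  have e06 : acE (g * X * h) 0 6 = (g 0 0 * acE X 0 5 + g 0 1 * acE X 1 5) * h 5 6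
      + (g 0 0 * acE X 0 6 + g 0 1 * acE X 1 6) * h 6 6 := by
    rw [hac _ _ (by decide), conj_apply]
    simp [Fin.sum_univ_seven, qu_sq k hX, qb0, hg, hh]
  have a12 : (g * X * h) 1 2 = g 1 1 * X 1 2 * h 2 2 := by
    rw [conj_apply]; simp [Fin.sum_univ_seven, z, qb0, hg, hh]
  have a02 : (g * X * h) 0 2 = (g 0 0 * X 0 2 + g 0 1 * X 1 2) * h 2 2 := by
    rw [conj_apply]; simp [Fin.sum_univ_seven, z, qb0, hg, hh]
  have a13 : (g * X * h) 1 3 = g 1 1 * X 1 2 * h 2 3 + g 1 1 * X 1 3 * h 3 3 := by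
    rw [conj_apply]; simp [Fin.sum_univ_seven, z, qb0, hg, hh]
  have a03 : (g * X * h) 0 3 = (g 0 0 * X 0 2 + g 0 1 * X 1 2) * h 2 3
      + (g 0 0 * X 0 3 + g 0 1 * X 1 3) * h 3 3 := by
    rw [conj_apply]; simp [Fin.sum_univ_seven, z, qb0, hg, hh]
  have c45 : (g * X * h) 4 5 = g 4 4 * X 4 5 * h 5 5 := by
    rw [conj_apply]; simp [Fin.sum_univ_seven, z, qb0, hg, hh]
  have c35 : (g * X * h) 3 5 = (g 3 3 * X 3 5 + g 3 4 * X 4 5) * h 5 5 := by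
    rw [conj_apply]; simp [Fin.sum_univ_seven, z, qb0, hg, hh]
  have c46 : (g * X * h) 4 6 = g 4 4 * X 4 5 * h 5 6 + g 4 4 * X 4 6 * h 6 6 := by
    rw [conj_apply]; simp [Fin.sum_univ_seven, z, qb0, hg, hh]
  have c36 : (g * X * h) 3 6 = (g 3 3 * X 3 5 + g 3 4 * X 4 5) * h 5 6
      + (g 3 3 * X 3 6 + g 3 4 * X 4 6) * h 6 6 := by
    rw [conj_apply]; simp [Fin.sum_univ_seven, z, qb0, hg, hh]
  refine ⟨g 1 1 * h 2 2 * g 4 4 * h 5 5 * (g 0 0 * g 1 1 * h 5 5 * h 6 6), ?_, ?_⟩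
  · unfold numP
    rw [e15, a12, a02, a13, a03, c45, c35, c46, c36]
    linear_combination (g 0 0 * g 1 1 * h 2 2 * g 4 4 * h 5 5 * h 6 6 * g 1 1 * h 5 5 *
      ((X 0 2 * X 1 3 - X 0 3 * X 1 2) * (X 3 5 * X 4 6 - X 3 6 * X 4 5) * acE X 1 5)) * hd 3
  · unfold denR
    rw [e15, e05, e16, e06, a12, c45]
    ring
end

/-- test matrices -/
def tst {k : Type*} [Field k] (a b c d e f p q r s u v : k) : Matrix (Fin 7) (Fin 7) k :=
  !![0,0,a,b,c,0,0; 0,0,d,e,f,0,0; 0,0,0,0,0,p,q; 0,0,0,0,0,r,s; 0,0,0,0,0,u,v;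
     0,0,0,0,0,0,0; 0,0,0,0,0,0,0]

lemma tst_qu {k : Type*} [Field k] (a b c d e f p q r s u v : k) :
    tst a b c d e f p q r s u v ∈ qu0 k := by
  intro i j hij
  fin_cases i <;> fin_cases j <;> first | rfl | (exfalso; revert hij; decide)

lemma tst_qu' {k : Type*} [Field k] (a b c d e f p q r s u v : k) (i j : Fin 7)
    (hij : qb0 i = 0 ∧ qb0 j = 2) : tst a b c d e f p q r s u v i j = 0 := by
  fin_cases i <;> fin_cases j <;> first | rfl | (exfalso; revert hij; decide)

lemma tst_P {k : Type*} [Field k] (a b c d e f p q r s u v : k) :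
    numP (tst a b c d e f p q r s u v) =
      (a * e - b * d) * (r * v - s * u) * (d * p + e * r + f * u) := rfl

lemma tst_R {k : Type*} [Field k] (a b c d e f p q r s u v : k) :
    denR (tst a b c d e f p q r s u v) =
      d * u * ((a * p + b * r + c * u) * (d * q + e * s + f * v)
        - (a * q + b * s + c * v) * (d * p + e * r + f * u)) := rfl

/-- For `a = (2,3,2)` and `d = (1,…,1)` the Borel subgroup `B ⊆ GL₇(k)` acts on `q_u` with
infinitely many orbits; indeed `dim B/Q_u = dim q_u/q_u'` (both equal `12 = 28 − 16 =
16 − 4`), and since the scalar matrices act trivially, no induced `B`-orbit is dense in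
`q_u/q_u'` (realized as the matrices of `q_u` with vanishing `(1,3)` block, with its
Zariski topology). -/
theorem stmt0 (k : Type*) [Field k] [IsAlgClosed k] :
    (orbits0 k).Infinite ∧
    (Nat.card {p : Fin 7 × Fin 7 // (p.1 : ℕ) ≤ (p.2 : ℕ)} -
        Nat.card {p : Fin 7 × Fin 7 // qb0 p.1 < qb0 p.2} =
      Nat.card {p : Fin 7 × Fin 7 // qb0 p.1 < qb0 p.2} -
        Nat.card {p : Fin 7 × Fin 7 // qb0 p.1 = 0 ∧ qb0 p.2 = 2}) ∧
    ∀ X ∈ qu0 k,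
      ¬ ({Y | Y ∈ qu0 k ∧ ∀ i j : Fin 7, qb0 i = 0 ∧ qb0 j = 2 → Y i j = 0} ⊆
        @closure _ (zariskiMat k)
          {Y | ∃ g h, g ∈ B0 k ∧ g * h = 1 ∧ h * g = 1 ∧ Y = proj0 k (g * X * h)}) := by
  refine ⟨?_, ?_, ?_⟩
  · let F : k → Matrix (Fin 7) (Fin 7) k := fun l => tst 0 (-1) 1 1 0 0 l 1 0 (-1) 1 (-1)
    have hP : ∀ l, numP (F l) = l := fun l => by simp only [F, tst_P]; ring
    have hR : ∀ l, denR (F l) = 1 := fun l => by simp only [F, tst_R]; ring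
    have : Infinite k := IsAlgClosed.instInfinite
    refine Set.infinite_of_injective_forall_mem (f := fun l : k =>
      {Y | ∃ g h, g ∈ B0 k ∧ g * h = 1 ∧ h * g = 1 ∧ Y = g * F l * h}) ?_ ?_
    · intro l m hlm
      have hm : F m ∈ {Y | ∃ g h, g ∈ B0 k ∧ g * h = 1 ∧ h * g = 1 ∧ Y = g * F l * h} := by
        have h1 : F m ∈ {Y | ∃ g h, g ∈ B0 k ∧ g * h = 1 ∧ h * g = 1 ∧ Y = g * F m * h} := by
          refine ⟨1, 1, ⟨⟨1, by simp, by simp⟩, ?_⟩, by simp, by simp, by simp⟩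
          intro i j hij
          exact Matrix.one_apply_ne (by rintro rfl; exact lt_irrefl _ hij)
        have h2 := (Set.ext_iff.mp hlm (F m)).mpr h1
        exact h2
      obtain ⟨g, h, hg, hgh, hhg, hY⟩ := hm
      obtain ⟨c, h1, h2⟩ := semi k hg.2 (upper_inv k hg hgh) (tst_qu _ _ _ _ _ _ _ _ _ _ _ _ : F l ∈ qu0 k) hhg
      rw [← hY, hP, hP] at h1
      rw [← hY, hR, hR] at h2
      rw [h1, ← mul_one c, ← h2, one_mul]
    · intro l
      exact ⟨F l, tst_qu _ _ _ _ _ _ _ _ _ _ _ _, rfl⟩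
  · simp only [Nat.card_eq_fintype_card]
    decide +kernel
  · intro X hX hsub
    have key : ∀ (α β : k), α * numP X + β * denR X = 0 →
        ∀ Y, Y ∈ qu0 k → (∀ i j : Fin 7, qb0 i = 0 ∧ qb0 j = 2 → Y i j = 0) →
        α * numP Y + β * denR Y = 0 := by
      intro α β h0 Y hY hY'
      have hc := zar_closed k (MvPolynomial.C α * (numP fun i j => MvPolynomial.X (i, j)) +
        MvPolynomial.C β * (denR fun i j => MvPolynomial.X (i, j)))
      simp only [map_add, map_mul, MvPolynomial.eval_C, eval_numP, eval_denR] at hc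
      letI := zariskiMat k
      refine closure_minimal ?_ hc (hsub ⟨hY, hY'⟩)
      rintro _ ⟨g, h, hg, hgh, hhg, rfl⟩
      obtain ⟨c, h1, h2⟩ := semi k hg.2 (upper_inv k hg hgh) hX hhg
      simp only [Set.mem_setOf_eq, numP_proj, denR_proj, h1, h2]
      linear_combination c * h0
    have k1 := key (denR X) (-numP X) (by ring)
    have h1 := k1 _ (tst_qu 1 0 0 0 1 0 0 0 1 0 0 1) (tst_qu' _ _ _ _ _ _ _ _ _ _ _ _)
    have h2 := k1 _ (tst_qu 0 0 1 1 0 0 0 1 0 0 1 0) (tst_qu' _ _ _ _ _ _ _ _ _ _ _ _)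
    rw [tst_P, tst_R] at h1 h2
    have hP : numP X = 0 := by linear_combination (-1 : k) * h2
    have h3 := key 1 0 (by rw [hP]; ring) _ (tst_qu 1 0 0 0 1 0 0 0 1 0 0 1)
      (tst_qu' _ _ _ _ _ _ _ _ _ _ _ _)
    rw [tst_P, tst_R] at h3
    simp at h3
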